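/- The map I : NBV([a,b]) → (C([a,b],ℂ))′ sending φ to the functional x ↦ ∫_a^b x(t) dφ(t) is an isometric isomorphism of Banach spaces, where NBV is normed by total variation. -/

import Mathlib

/-- `I` is the Riemann–Stieltjes integral `∫_a^b x dφ` (mesh limit of tagged
Riemann–Stieltjes sums). -/
def IsRSIntegral (a b : ℝ) (φ x : ℝ → ℂ) (I : ℂ) : Prop :=
  ∀ ε > (0 : ℝ), ∃ δ > (0 : ℝ), ∀ (n : ℕ) (t : Fin (n + 1) → ℝ) (ξ : Fin n → ℝ),
    t 0 = a → t (Fin.last n) = b → Monotone t →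
    (∀ i : Fin n, t i.castSucc ≤ ξ i ∧ ξ i ≤ t i.succ ∧ t i.succ - t i.castSucc < δ) →
    ‖(∑ i : Fin n, x (ξ i) * (φ (t i.succ) - φ (t i.castSucc))) - I‖ < ε

/-- `φ` belongs to `NBV([a,b])`: bounded variation on `[a,b]`, left-continuous on
`(a,b)`, `φ(a) = 0` (normalized outside `[a,b]` by constancy). -/
def NBVOn (a b : ℝ) (φ : ℝ → ℂ) : Prop :=
  BoundedVariationOn φ (Set.Icc a b) ∧
    (∀ t ∈ Set.Ioo a b, ContinuousWithinAt φ (Set.Iio t) t) ∧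
    φ a = 0 ∧ (∀ t ≤ a, φ t = 0) ∧ (∀ t, b ≤ t → φ t = φ b)

/-- The functional `ℓ` on `C([a,b],ℂ)` is represented by Riemann–Stieltjes integration
against `φ`. -/
def RepresentsOn (a b : ℝ) (hab : a ≤ b) (φ : ℝ → ℂ) (ℓ : C(Set.Icc a b, ℂ) →L[ℂ] ℂ) :
    Prop :=
  ∀ x : C(Set.Icc a b, ℂ), IsRSIntegral a b φ (Set.IccExtend hab x) (ℓ x)

open Filter Topology Set MeasureTheory

namespace RSAux

/-- Tagged partitions: number of intervals, nodes, tags. -/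
abbrev TP : Type := ℕ × (ℕ → ℝ) × (ℕ → ℝ)

/-- Tagged partitions of mesh less than `δ`. -/
def tpSet (a b δ : ℝ) : Set TP :=
  {p | p.2.1 0 = a ∧ p.2.1 p.1 = b ∧ Monotone p.2.1 ∧
    ∀ i < p.1, p.2.1 i ≤ p.2.2 i ∧ p.2.2 i ≤ p.2.1 (i + 1) ∧ p.2.1 (i + 1) - p.2.1 i < δ}

/-- Riemann–Stieltjes sums. -/
noncomputable def rsSum (φ x : ℝ → ℂ) (p : TP) : ℂ :=
  ∑ i ∈ Finset.range p.1, x (p.2.2 i) * (φ (p.2.1 (i + 1)) - φ (p.2.1 i))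

/-- The filter of tagged partitions of mesh going to zero. -/
noncomputable def rsF (a b : ℝ) : Filter TP := ⨅ δ ∈ Ioi (0 : ℝ), 𝓟 (tpSet a b δ)

lemma rsF_basis (a b : ℝ) : (rsF a b).HasBasis (fun δ : ℝ => 0 < δ) (tpSet a b) := by
  refine hasBasis_biInf_principal (s := tpSet a b) (S := Ioi (0:ℝ)) ?_ ⟨1, mem_Ioi.2 one_pos⟩
  intro δ₁ h₁ δ₂ h₂
  refine ⟨min δ₁ δ₂, mem_Ioi.2 (lt_min (mem_Ioi.1 h₁) (mem_Ioi.1 h₂)), ?_, ?_⟩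
  · rintro p ⟨h1, h2, h3, h4⟩
    exact ⟨h1, h2, h3, fun i hi => ⟨(h4 i hi).1, (h4 i hi).2.1, (h4 i hi).2.2.trans_le (min_le_left _ _)⟩⟩
  · rintro p ⟨h1, h2, h3, h4⟩
    exact ⟨h1, h2, h3, fun i hi => ⟨(h4 i hi).1, (h4 i hi).2.1, (h4 i hi).2.2.trans_le (min_le_right _ _)⟩⟩

lemma rs_iff (a b : ℝ) (φ x : ℝ → ℂ) (I : ℂ) :
    IsRSIntegral a b φ x I ↔ Tendsto (rsSum φ x) (rsF a b) (𝓝 I) := by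
  rw [(rsF_basis a b).tendsto_iff Metric.nhds_basis_ball]
  unfold IsRSIntegral
  refine forall₂_congr fun ε hε => exists_congr fun δ => and_congr_right fun hδ => ?_
  constructor
  · rintro h ⟨n, t, ξ⟩ ⟨h1, h2, h3, h4⟩
    have := h n (fun i => t i) (fun i => ξ i) (by simpa using h1) (by simpa using h2)
      (fun i j hij => h3 hij) (fun i => by simpa using h4 i i.2)
    rw [Metric.mem_ball, dist_eq_norm]
    simpa [rsSum, Finset.sum_range] using this
  · intro h n t ξ h1 h2 h3 h4
    have key := h (n, (fun i => t ⟨min i n, by omega⟩),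
      (fun i => if h : i < n then ξ ⟨i, h⟩ else 0)) ⟨by simpa using h1, ?_, ?_, ?_⟩
    · rw [Metric.mem_ball, dist_eq_norm] at key
      refine lt_of_eq_of_lt (congrArg (fun z => ‖z - I‖) ?_) key
      unfold rsSum
      rw [Finset.sum_range]
      refine Finset.sum_congr rfl fun i _ => ?_
      have e1 : (⟨min ((i:ℕ) + 1) n, by omega⟩ : Fin (n+1)) = i.succ := by
        ext; simp
      have e2 : (⟨min (i:ℕ) n, by omega⟩ : Fin (n+1)) = i.castSucc := by
        ext; simp
      simp only [e1, e2, i.2, dif_pos, Fin.eta]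
    · simp only [min_self]; exact h2
    · intro i j hij
      exact h3 (by simp only [Fin.mk_le_mk]; omega)
    · intro i hi
      simp only at hi
      have e1 : (⟨min ((i:ℕ) + 1) n, by omega⟩ : Fin (n+1)) = (⟨i, hi⟩ : Fin n).succ := by
        ext; simp; omega
      have e2 : (⟨min (i:ℕ) n, by omega⟩ : Fin (n+1)) = (⟨i, hi⟩ : Fin n).castSucc := by
        ext; simp; omega
      simpa [e1, e2, hi] using h4 ⟨i, hi⟩

lemma exists_tp {a b : ℝ} (hab : a < b) {D : Set ℝ} (hD : Dense D) {δ : ℝ} (hδ : 0 < δ) :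
    ∃ p ∈ tpSet a b δ, ∀ i, p.2.1 i = a ∨ b ≤ p.2.1 i ∨ p.2.1 i ∈ D := by
  obtain ⟨N, hN⟩ := exists_nat_gt (max 1 (2 * (b - a) / δ))
  have hN1 : (1:ℝ) < N := (le_max_left _ _).trans_lt hN
  have hN2 : 2 * (b - a) / δ < N := (le_max_right _ _).trans_lt hN
  have hN0 : (0:ℝ) < N := by linarith
  set h : ℝ := (b - a) / N with hh
  have hpos : 0 < h := div_pos (by linarith) hN0
  have hNh : N * h = b - a := by rw [hh]; field_simp
  have h2 : 2 * h < δ := by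
    rw [hh, ← mul_div_assoc, div_lt_iff₀ hN0]
    rw [div_lt_iff₀ hδ] at hN2; linarith
  have hp : ∀ i : ℕ, ∃ y ∈ D, a + i * h < y ∧ y < a + (i + 1) * h := by
    intro i
    obtain ⟨y, hy, hy'⟩ := hD.exists_between (show a + i * h < a + (i + 1) * h by nlinarith)
    exact ⟨y, hy, hy'⟩
  choose p hpD hp1 hp2 using hp
  have hN' : 1 < N := by exact_mod_cast hN1
  let t : ℕ → ℝ := fun i => if i = 0 then a else if N ≤ i then b else p i
  have t0 : t 0 = a := by simp [t]
  have tN : ∀ i, N ≤ i → t i = b := fun i hi => by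
    have : i ≠ 0 := by omega
    simp [t, hi, this]
  have tm : ∀ i, 0 < i → i < N → t i = p i := fun i h0 hi => by
    have : i ≠ 0 := by omega
    simp [t, this, not_le.2 hi]
  have lo : ∀ i ≤ N, a + i * h ≤ t i := by
    intro i hi
    rcases Nat.eq_zero_or_pos i with rfl | h0
    · simp [t0]
    rcases hi.lt_or_eq with h1 | rfl
    · rw [tm i h0 h1]; exact (hp1 i).le
    · rw [tN _ le_rfl]; linarith
  have up : ∀ i ≤ N, t i ≤ a + (i + 1) * h := by
    intro i hi
    rcases Nat.eq_zero_or_pos i with rfl | h0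
    · simp [t0, hpos.le]
    rcases hi.lt_or_eq with h1 | rfl
    · rw [tm i h0 h1]; exact (hp2 i).le
    · rw [tN _ le_rfl]; linarith
  have hstep : ∀ i, t i ≤ t (i + 1) := by
    intro i
    rcases lt_or_ge i N with hi | hi
    · rcases Nat.lt_or_ge (i+1) N with h1 | h1
      · have := up i hi.le
        have := lo (i+1) hi
        push_cast at this; linarith
      · have e : i + 1 = N := by omega
        have := up i hi.le
        rw [tN _ h1]
        have e' : (i:ℝ) + 1 = N := by exact_mod_cast e
        rw [e'] at this; linarith
    · rw [tN _ hi, tN _ (by omega)]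
  refine ⟨(N, t, t), ⟨t0, tN _ le_rfl, monotone_nat_of_le_succ hstep, fun i hi => ⟨le_rfl, hstep i, ?_⟩⟩, ?_⟩
  · simp only at hi ⊢
    have := lo i hi.le
    have := up (i+1) hi
    push_cast at this; linarith
  · intro i
    simp only
    rcases Nat.eq_zero_or_pos i with rfl | h0
    · exact Or.inl t0
    rcases lt_or_ge i N with h1 | h1
    · rw [tm i h0 h1]; exact Or.inr (Or.inr (hpD i))
    · exact Or.inr (Or.inl (tN i h1).ge)

lemma rsF_neBot {a b : ℝ} (hab : a < b) : (rsF a b).NeBot := by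
  rw [(rsF_basis a b).neBot_iff]
  intro δ hδ
  obtain ⟨p, hp, -⟩ := exists_tp hab dense_univ hδ
  exact ⟨p, hp⟩

lemma tp_mem {a b δ : ℝ} {p : TP} (hp : p ∈ tpSet a b δ) {i : ℕ} (hi : i ≤ p.1) :
    p.2.1 i ∈ Icc a b := by
  obtain ⟨h1, h2, h3, h4⟩ := hp
  exact ⟨h1 ▸ h3 (Nat.zero_le i), h2 ▸ h3 hi⟩

lemma exists_mono {a b : ℝ} (hab : a < b) {g : ℝ → ℝ} (hg : MonotoneOn g (Icc a b))
    {x : ℝ → ℂ} (hx : UniformContinuous x) {C : ℝ} (hC : ∀ s, ‖x s‖ ≤ C) :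
    ∃ I, Tendsto (rsSum (fun s => (g s : ℂ)) x) (rsF a b) (𝓝 I) := by
  let S : ℝ → Set ℝ := fun s => {t | t ∈ Icc a b ∧ (t = b ∨ s ≤ g t)}
  let G : ℝ → ℝ := fun s => sInf (S s)
  have hb : ∀ s, b ∈ S s := fun s => ⟨⟨hab.le, le_rfl⟩, Or.inl rfl⟩
  have hbd : ∀ s, BddBelow (S s) := fun s => ⟨a, fun t ht => ht.1.1⟩
  have Gm : Monotone G := by
    intro s s' h
    refine csInf_le_csInf (hbd s) ⟨b, hb s'⟩ ?_
    rintro t ⟨h1, h2⟩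
    exact ⟨h1, h2.imp_right h.trans⟩
  have hint : ∀ u v, IntervalIntegrable (fun s => x (G s)) volume u v := by
    intro u v
    refine IntervalIntegrable.mono_fun (g := fun s => x (G s)) (f := fun _ : ℝ => C) (μ := volume) intervalIntegrable_const ?_ ?_
    · exact (hx.continuous.measurable.comp Gm.measurable).aestronglyMeasurable
    · refine ae_of_all _ fun s => ?_
      exact (hC _).trans (le_abs_self C)
  refine ⟨∫ s in (g a)..(g b), x (G s), ?_⟩
  rw [(rsF_basis a b).tendsto_iff Metric.nhds_basis_ball]
  intro ε hε
  have hgab : g a ≤ g b := hg ⟨le_rfl, hab.le⟩ ⟨hab.le, le_rfl⟩ hab.le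
  set ε' := ε / (2 * (g b - g a + 1)) with hε'
  have hε'0 : 0 < ε' := by apply div_pos hε; linarith
  obtain ⟨δ, hδ, hxδ⟩ := Metric.uniformContinuous_iff.1 hx ε' hε'0
  refine ⟨δ, hδ, ?_⟩
  rintro ⟨n, t, ξ⟩ hp
  have hmem := fun i hi => tp_mem (i := i) hp hi
  obtain ⟨h1, h2, h3, h4⟩ := hp
  simp only at h1 h2 h3 h4 hmem
  rw [Metric.mem_ball, dist_eq_norm]
  have e : ∫ s in (g a)..(g b), x (G s) =
      ∑ i ∈ Finset.range n, ∫ s in (g (t i))..(g (t (i+1))), x (G s) := by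
    rw [intervalIntegral.sum_integral_adjacent_intervals (a := fun i => g (t i)) (fun k _ => hint _ _), h1, h2]
  have e2 : rsSum (fun s => (g s : ℂ)) x (n, t, ξ) - ∫ s in (g a)..(g b), x (G s) =
      ∑ i ∈ Finset.range n, ∫ s in (g (t i))..(g (t (i+1))), (x (ξ i) - x (G s)) := by
    rw [e, rsSum, ← Finset.sum_sub_distrib]
    refine Finset.sum_congr rfl fun i _ => ?_
    rw [intervalIntegral.integral_sub (by simp) (hint _ _)]
    simp [mul_comm]
  rw [e2]
  have hmon : ∀ i < n, g (t i) ≤ g (t (i+1)) := fun i hi =>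
    hg (hmem i hi.le) (hmem (i+1) hi) (h3 (Nat.le_succ i))
  calc _ ≤ ∑ i ∈ Finset.range n, ε' * (g (t (i+1)) - g (t i)) := by
        refine norm_sum_le_of_le _ fun i hi => ?_
        have hi := Finset.mem_range.1 hi
        rw [← abs_of_nonneg (sub_nonneg.2 (hmon i hi))]
        refine intervalIntegral.norm_integral_le_of_norm_le_const fun s hs => ?_
        rw [uIoc_of_le (hmon i hi)] at hs
        rw [← dist_eq_norm]
        refine (hxδ ?_).le
        have g1 : G s ≤ t (i+1) := csInf_le (hbd s) ⟨hmem _ hi, Or.inr hs.2⟩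
        have g2 : t i ≤ G s := by
          refine le_csInf ⟨b, hb s⟩ ?_
          rintro u ⟨hu, rfl | hu'⟩
          · exact (hmem i hi.le).2
          · by_contra! hlt
            have := hg hu (hmem i hi.le) hlt.le
            linarith [hs.1]
        have := h4 i hi
        rw [Real.dist_eq, abs_lt]; constructor <;> linarith
    _ = ε' * (g b - g a) := by
        rw [← Finset.mul_sum, Finset.sum_range_sub (fun i => g (t i)), h1, h2]
    _ < ε := by
        rw [hε', div_mul_eq_mul_div, div_lt_iff₀ (by linarith)]
        nlinarith

lemma exists_bv {a b : ℝ} (hab : a < b) {φ : ℝ → ℂ} (hφ : BoundedVariationOn φ (Icc a b))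
    {x : ℝ → ℂ} (hx : UniformContinuous x) {C : ℝ} (hC : ∀ s, ‖x s‖ ≤ C) :
    ∃ I, Tendsto (rsSum φ x) (rsF a b) (𝓝 I) := by
  have hre : LipschitzWith 1 Complex.re := by
    refine LipschitzWith.of_dist_le_mul fun z w => ?_
    simpa [dist_eq_norm] using Complex.abs_re_le_norm (z - w)
  have him : LipschitzWith 1 Complex.im := by
    refine LipschitzWith.of_dist_le_mul fun z w => ?_
    simpa [dist_eq_norm] using Complex.abs_im_le_norm (z - w)
  obtain ⟨p, q, hp, hq, e1⟩ :=
    (hre.comp_locallyBoundedVariationOn hφ.locallyBoundedVariationOn).exists_monotoneOn_sub_monotoneOn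
  obtain ⟨p', q', hp', hq', e2⟩ :=
    (him.comp_locallyBoundedVariationOn hφ.locallyBoundedVariationOn).exists_monotoneOn_sub_monotoneOn
  obtain ⟨I1, h1⟩ := exists_mono hab hp hx hC
  obtain ⟨I2, h2⟩ := exists_mono hab hq hx hC
  obtain ⟨I3, h3⟩ := exists_mono hab hp' hx hC
  obtain ⟨I4, h4⟩ := exists_mono hab hq' hx hC
  refine ⟨(I1 - I2) + Complex.I * (I3 - I4), ?_⟩
  refine ((h1.sub h2).add ((h3.sub h4).const_mul Complex.I)).congr fun P => ?_
  simp only [rsSum, ← Finset.sum_sub_distrib, Finset.mul_sum, ← Finset.sum_add_distrib]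
  refine Finset.sum_congr rfl fun i _ => ?_
  have key : ∀ s, φ s = (p s - q s) + Complex.I * (p' s - q' s) := by
    intro s
    have a1 := congrFun e1 s
    have a2 := congrFun e2 s
    simp only [Function.comp, Pi.sub_apply] at a1 a2
    rw [← Complex.re_add_im (φ s), a1, a2]; push_cast; ring
  rw [key, key]; ring

lemma norm_rsSum_le {a b δ : ℝ} {φ : ℝ → ℂ} (hφ : BoundedVariationOn φ (Icc a b))
    {x : ℝ → ℂ} {C : ℝ} (hC0 : 0 ≤ C) (hC : ∀ s, ‖x s‖ ≤ C) {p : TP} (hp : p ∈ tpSet a b δ) :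
    ‖rsSum φ x p‖ ≤ C * (eVariationOn φ (Icc a b)).toReal := by
  have hs := eVariationOn.sum_le_of_monotoneOn_Iic (f := φ) (s := Icc a b) (n := p.1) (u := p.2.1)
    (hp.2.2.1.monotoneOn _) (fun i hi => tp_mem hp hi)
  have hs' : ∑ i ∈ Finset.range p.1, dist (φ (p.2.1 (i+1))) (φ (p.2.1 i)) ≤
      (eVariationOn φ (Icc a b)).toReal := by
    have := ENNReal.toReal_mono hφ hs
    rw [ENNReal.toReal_sum (fun i _ => edist_ne_top _ _)] at this
    simpa [dist_edist] using this
  refine le_trans ?_ (mul_le_mul_of_nonneg_left hs' hC0)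
  rw [Finset.mul_sum]
  refine norm_sum_le_of_le _ fun i _ => ?_
  rw [norm_mul, dist_eq_norm]
  exact mul_le_mul_of_nonneg_right (hC _) (norm_nonneg _)

lemma uc_ext {a b : ℝ} (hab : a ≤ b) (x : C(Icc a b, ℂ)) : UniformContinuous (IccExtend hab x) :=
  (CompactSpace.uniformContinuous_of_continuous x.continuous).comp
    (LipschitzWith.projIcc hab).uniformContinuous

lemma norm_ext {a b : ℝ} (hab : a ≤ b) (x : C(Icc a b, ℂ)) (s : ℝ) : ‖IccExtend hab x s‖ ≤ ‖x‖ :=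
  x.norm_coe_le_norm _

lemma represents_iff {a b : ℝ} (hab : a ≤ b) (φ : ℝ → ℂ) (ℓ : C(Icc a b, ℂ) →L[ℂ] ℂ) :
    RepresentsOn a b hab φ ℓ ↔
      ∀ x : C(Icc a b, ℂ), Tendsto (rsSum φ (IccExtend hab x)) (rsF a b) (𝓝 (ℓ x)) :=
  forall_congr' fun _ => rs_iff _ _ _ _ _

lemma norm_le_of_tendsto {a b : ℝ} (hab : a < b) {φ : ℝ → ℂ} (hφ : BoundedVariationOn φ (Icc a b))
    (x : C(Icc a b, ℂ)) {I : ℂ} (h : Tendsto (rsSum φ (IccExtend hab.le x)) (rsF a b) (𝓝 I)) :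
    ‖I‖ ≤ (eVariationOn φ (Icc a b)).toReal * ‖x‖ := by
  have := rsF_neBot hab
  refine le_of_tendsto h.norm ?_
  rw [mul_comm]
  filter_upwards [(rsF_basis a b).mem_of_mem one_pos] with p hp
  exact norm_rsSum_le hφ (norm_nonneg _) (norm_ext hab.le x) hp

lemma exists_rep {a b : ℝ} (hab : a < b) {φ : ℝ → ℂ} (hφ : BoundedVariationOn φ (Icc a b)) :
    ∃ ℓ : C(Icc a b, ℂ) →L[ℂ] ℂ, RepresentsOn a b hab.le φ ℓ := by
  have := rsF_neBot hab
  choose I hI using fun x : C(Icc a b, ℂ) => exists_bv hab hφ (uc_ext hab.le x) (norm_ext hab.le x)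
  let L : C(Icc a b, ℂ) →ₗ[ℂ] ℂ :=
    { toFun := I
      map_add' := fun x y => by
        refine tendsto_nhds_unique (hI (x + y)) (((hI x).add (hI y)).congr fun p => ?_)
        simp only [rsSum, ← Finset.sum_add_distrib]
        refine Finset.sum_congr rfl fun i _ => ?_
        simp [IccExtend, add_mul]
      map_smul' := fun c x => by
        refine tendsto_nhds_unique (hI (c • x)) (((hI x).const_mul c).congr fun p => ?_)
        simp only [rsSum, Finset.mul_sum]
        refine Finset.sum_congr rfl fun i _ => ?_
        simp [IccExtend, mul_assoc] }
  refine ⟨L.mkContinuous _ fun x => norm_le_of_tendsto hab hφ x (hI x), ?_⟩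
  rw [represents_iff]
  exact hI

lemma rep_unique {a b : ℝ} (hab : a < b) {φ : ℝ → ℂ} {ℓ ℓ' : C(Icc a b, ℂ) →L[ℂ] ℂ}
    (h : RepresentsOn a b hab.le φ ℓ) (h' : RepresentsOn a b hab.le φ ℓ') : ℓ = ℓ' := by
  have := rsF_neBot hab
  rw [represents_iff] at h h'
  ext x
  exact tendsto_nhds_unique (h x) (h' x)

lemma rep_add {a b : ℝ} (hab : a < b) {φ ψ : ℝ → ℂ} {ℓ ℓ' : C(Icc a b, ℂ) →L[ℂ] ℂ}
    (h : RepresentsOn a b hab.le φ ℓ) (h' : RepresentsOn a b hab.le ψ ℓ') :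
    RepresentsOn a b hab.le (φ + ψ) (ℓ + ℓ') := by
  rw [represents_iff] at *
  intro x
  refine ((h x).add (h' x)).congr fun p => ?_
  simp only [rsSum, ← Finset.sum_add_distrib, Pi.add_apply]
  exact Finset.sum_congr rfl fun i _ => by ring

lemma rep_smul {a b : ℝ} (hab : a < b) (c : ℂ) {φ : ℝ → ℂ} {ℓ : C(Icc a b, ℂ) →L[ℂ] ℂ}
    (h : RepresentsOn a b hab.le φ ℓ) :
    RepresentsOn a b hab.le (c • φ) (c • ℓ) := by
  rw [represents_iff] at *
  intro x
  refine ((h x).const_mul c).congr fun p => ?_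
  simp only [rsSum, Finset.mul_sum, Pi.smul_apply, smul_eq_mul]
  exact Finset.sum_congr rfl fun i _ => by ring

lemma sum_parts (X : ℕ → ℝ) (f : ℕ → ℂ) (n : ℕ) :
    ∑ i ∈ Finset.range n, (X i : ℂ) * (f (i + 1) - f i) =
      X n * f n - X 0 * f 0 + ∑ i ∈ Finset.range n, f (i + 1) * ((X i - X (i + 1) : ℝ) : ℂ) := by
  induction n with
  | zero => simp
  | succ n ih => rw [Finset.sum_range_succ, Finset.sum_range_succ, ih]; push_cast; ring

lemma inj_zero {a b : ℝ} (hab : a < b) {φ : ℝ → ℂ} (hφ : NBVOn a b φ)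
    (h : RepresentsOn a b hab.le φ 0) : φ = 0 := by
  have := rsF_neBot hab
  rw [represents_iff] at h
  obtain ⟨-, hlc, ha, hla, hgb⟩ := hφ
  have hb : φ b = 0 := by
    refine tendsto_nhds_unique ?_ (h 1)
    refine Tendsto.congr' ?_ tendsto_const_nhds
    filter_upwards [(rsF_basis a b).mem_of_mem one_pos] with p hp
    have e : ∀ s, IccExtend hab.le (1 : C(Icc a b, ℂ)) s = 1 := fun s => rfl
    simp only [rsSum, e, one_mul]
    rw [Finset.sum_range_sub (fun i => φ (p.2.1 i)), hp.1, hp.2.1, ha, sub_zero]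
  have hin : ∀ t ∈ Ioo a b, φ t = 0 := by
    intro t ht
    have hle : ∀ ε > 0, ‖φ t‖ ≤ 0 + ε := by
      intro ε hε
      obtain ⟨r₀, hr₀, hr₀'⟩ := Metric.continuousWithinAt_iff.1 (hlc t ht) (ε / 2) (half_pos hε)
      set r := min r₀ (t - a) with hr
      have hrpos : 0 < r := lt_min hr₀ (sub_pos.2 ht.1)
      have hra : r ≤ t - a := min_le_right _ _
      have hrr : r ≤ r₀ := min_le_left _ _
      have hclose : ∀ s, t - r < s → s < t → ‖φ s - φ t‖ ≤ ε / 2 := by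
        intro s h1 h2
        rw [← dist_eq_norm]
        refine (hr₀' h2 ?_).le
        rw [Real.dist_eq, abs_lt]; constructor <;> linarith
      let X : ℝ → ℝ := fun s => max 0 (min 1 ((t - r / 3 - s) / (r / 3)))
      have hX1 : ∀ s ≤ t - 2 * r / 3, X s = 1 := by
        intro s hs
        have : 1 ≤ (t - r / 3 - s) / (r / 3) := by
          rw [le_div_iff₀ (by positivity)]; linarith
        simp [X, min_eq_left this]
      have hX0 : ∀ s, t - r / 3 ≤ s → X s = 0 := by
        intro s hs
        have : (t - r / 3 - s) / (r / 3) ≤ 0 := div_nonpos_of_nonpos_of_nonneg (by linarith) (by positivity)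
        simp [X, min_eq_right (this.trans zero_le_one), this]
      have hXanti : Antitone X := by
        intro s s' hs
        simp only [X]
        gcongr
      have hXc : Continuous X := by
        simp only [X]
        fun_prop
      let x : C(Icc a b, ℂ) := ⟨fun s => (X s : ℂ), by fun_prop⟩
      have hx : ∀ s ∈ Icc a b, IccExtend hab.le x s = X s := by
        intro s hs
        rw [IccExtend_of_mem _ _ hs]; rfl
      have hT := h x
      rw [(rsF_basis a b).tendsto_iff Metric.nhds_basis_ball] at hT
      obtain ⟨δ, hδ, hδ'⟩ := hT (ε / 2) (half_pos hε)
      obtain ⟨⟨n, u, ξ⟩, hp, -⟩ := exists_tp hab dense_univ (lt_min hδ (show 0 < r / 3 by positivity))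
      have hp' : (n, u, u) ∈ tpSet a b δ :=
        ⟨hp.1, hp.2.1, hp.2.2.1, fun i hi => ⟨le_rfl, hp.2.2.1 (Nat.le_succ i),
          (hp.2.2.2 i hi).2.2.trans_le (min_le_left _ _)⟩⟩
      have hmesh : ∀ i < n, u (i + 1) - u i < r / 3 := fun i hi =>
        (hp.2.2.2 i hi).2.2.trans_le (min_le_right _ _)
      have hmem := fun i hi => tp_mem (i := i) hp' hi
      have hsum := hδ' _ hp'
      have u0 : u 0 = a := hp.1
      have un : u n = b := hp.2.1
      have um : Monotone u := hp.2.2.1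
      simp only [_root_.zero_apply, Metric.mem_ball, dist_zero_right] at hsum
      have Xa : X a = 1 := hX1 a (by linarith)
      have Xb : X b = 0 := hX0 b (by linarith [ht.2])
      have e : rsSum φ (IccExtend hab.le x) (n, u, u) - φ t =
          ∑ i ∈ Finset.range n, (φ (u (i+1)) - φ t) * ((X (u i) - X (u (i+1)) : ℝ) : ℂ) := by
        have e1 : rsSum φ (IccExtend hab.le x) (n, u, u) =
            ∑ i ∈ Finset.range n, ((X (u i) : ℝ) : ℂ) * (φ (u (i+1)) - φ (u i)) := by
          refine Finset.sum_congr rfl fun i hi => ?_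
          simp only
          rw [hx _ (hmem i (Finset.mem_range.1 hi).le)]
        rw [e1, sum_parts (fun i => X (u i)) (fun i => φ (u i)) n]
        simp only [sub_mul, Finset.sum_sub_distrib, ← Finset.mul_sum]
        rw [← Complex.ofReal_sum, Finset.sum_range_sub' (fun i => X (u i))]
        simp [u0, un, Xa, Xb, ha]
      have hb2 : ‖rsSum φ (IccExtend hab.le x) (n, u, u) - φ t‖ ≤ ε / 2 := by
        rw [e]
        calc _ ≤ ∑ i ∈ Finset.range n, ε / 2 * (X (u i) - X (u (i+1))) := by
              refine norm_sum_le_of_le _ fun i hi => ?_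
              have hi := Finset.mem_range.1 hi
              have hnn : 0 ≤ X (u i) - X (u (i+1)) := sub_nonneg.2 (hXanti (um (Nat.le_succ i)))
              rw [norm_mul, Complex.norm_real, Real.norm_of_nonneg hnn]
              rcases le_or_gt (u (i+1)) (t - 2 * r / 3) with h1 | h1
              · rw [hX1 _ h1, hX1 _ ((um (Nat.le_succ i)).trans h1)]; simp
              rcases le_or_gt (t - r / 3) (u i) with h2 | h2
              · rw [hX0 _ h2, hX0 _ (h2.trans (um (Nat.le_succ i)))]; simp
              · refine mul_le_mul_of_nonneg_right (hclose _ ?_ ?_) hnn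
                · linarith
                · linarith [hmesh i hi]
          _ = ε / 2 := by
              rw [← Finset.mul_sum, Finset.sum_range_sub' (fun i => X (u i))]
              simp [u0, un, Xa, Xb]
      have := norm_sub_le (rsSum φ (IccExtend hab.le x) (n, u, u)) (rsSum φ (IccExtend hab.le x) (n, u, u) - φ t)
      rw [sub_sub_cancel] at this
      linarith
    have := le_of_forall_pos_le_add hle
    simpa using this
  funext t
  rcases le_or_gt t a with h1 | h1
  · exact hla t h1
  rcases le_or_gt b t with h2 | h2
  · rw [hgb t h2, hb]; rfl
  · exact hin t ⟨h1, h2⟩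

/-- The interval with the discrete topology. -/
def DIcc (a b : ℝ) : Type := Icc a b

instance (a b : ℝ) : TopologicalSpace (DIcc a b) := ⊥
instance (a b : ℝ) : DiscreteTopology (DIcc a b) := ⟨rfl⟩

open BoundedContinuousFunction

/-- Inclusion of continuous functions in bounded functions. -/
noncomputable def incl (a b : ℝ) : C(Icc a b, ℂ) →ₗᵢ[ℂ] (DIcc a b →ᵇ ℂ) where
  toFun x := ofNormedAddCommGroupDiscrete (α := DIcc a b) (fun s => x s) ‖x‖ (fun s => x.norm_coe_le_norm s)
  map_add' x y := rfl
  map_smul' c x := rfl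
  norm_map' x := by
    apply le_antisymm
    · exact (norm_le (norm_nonneg _)).2 fun s => x.norm_coe_le_norm s
    · refine (ContinuousMap.norm_le _ (norm_nonneg _)).2 fun s => ?_
      exact (ofNormedAddCommGroupDiscrete (α := DIcc a b) (fun s => x s) ‖x‖ (fun s => x.norm_coe_le_norm s)).norm_coe_le_norm s

lemma exists_ext {a b : ℝ} (ℓ : C(Icc a b, ℂ) →L[ℂ] ℂ) :
    ∃ L : (DIcc a b →ᵇ ℂ) →L[ℂ] ℂ, (∀ x, L (incl a b x) = ℓ x) ∧ ‖L‖ ≤ ‖ℓ‖ := by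
  let e := (incl a b).equivRange
  let f : StrongDual ℂ (LinearMap.range (incl a b).toLinearMap) := ℓ.comp (e.symm : _ →L[ℂ] _)
  obtain ⟨L, h1, h2⟩ := exists_extension_norm_eq _ f
  refine ⟨L, fun x => ?_, ?_⟩
  · have := h1 (e x)
    simp only [f, ContinuousLinearMap.comp_apply] at this
    have e2 : ((e x : LinearMap.range (incl a b).toLinearMap) : DIcc a b →ᵇ ℂ) = incl a b x := rfl
    rw [e2] at this
    rw [this]
    congr 1
    exact e.symm_apply_apply x
  · rw [h2]
    refine ContinuousLinearMap.opNorm_le_bound _ (norm_nonneg ℓ) fun y => ?_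
    have := ℓ.le_opNorm (e.symm y)
    rwa [e.symm.norm_map] at this

open Classical in
/-- Indicator of `[a,t]` (zero for `t ≤ a`), real values. -/
noncomputable def chiR (a : ℝ) (t s : ℝ) : ℝ := if a < t ∧ s ≤ t then 1 else 0

lemma chiR_mono (a s : ℝ) : Monotone (fun t => chiR a t s) := by
  intro t t' h
  simp only [chiR]
  split_ifs with h1 h2
  · exact le_rfl
  · exact absurd ⟨h1.1.trans_le h, h1.2.trans h⟩ h2
  · exact zero_le_one
  · exact le_rfl

lemma chiR_nonneg (a t s : ℝ) : 0 ≤ chiR a t s := by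
  unfold chiR; split_ifs <;> norm_num

lemma chiR_le (a t s : ℝ) : chiR a t s ≤ 1 := by
  unfold chiR; split_ifs <;> norm_num

/-- Indicator as an element of the space of bounded functions. -/
noncomputable def chi (a b t : ℝ) : DIcc a b →ᵇ ℂ :=
  ofNormedAddCommGroupDiscrete (α := DIcc a b) (fun s => (chiR a t s.1 : ℂ)) 1 (fun s => by
    rw [Complex.norm_real, Real.norm_of_nonneg (chiR_nonneg _ _ _)]; exact chiR_le _ _ _)

lemma chi_apply (a b t : ℝ) (s : DIcc a b) : chi a b t s = (chiR a t s.1 : ℂ) := rfl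

lemma norm_step_le (a s : ℝ) {u : ℕ → ℝ} (hu : Monotone u) (c : ℕ → ℂ) (n : ℕ) {K : ℝ} (hK : 0 ≤ K)
    (hc : ∀ i < n, chiR a (u (i+1)) s ≠ chiR a (u i) s → ‖c i‖ ≤ K) :
    ‖∑ i ∈ Finset.range n, c i * ((chiR a (u (i+1)) s : ℂ) - chiR a (u i) s)‖ ≤ K := by
  calc _ ≤ ∑ i ∈ Finset.range n, K * (chiR a (u (i+1)) s - chiR a (u i) s) := by
        refine norm_sum_le_of_le _ fun i hi => ?_
        have hnn : 0 ≤ chiR a (u (i+1)) s - chiR a (u i) s :=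
          sub_nonneg.2 (chiR_mono a s (hu (Nat.le_succ i)))
        rw [norm_mul, ← Complex.ofReal_sub, Complex.norm_real, Real.norm_of_nonneg hnn]
        by_cases h : chiR a (u (i+1)) s = chiR a (u i) s
        · simp [h]
        · exact mul_le_mul_of_nonneg_right (hc i (Finset.mem_range.1 hi) h) hnn
    _ = K * (chiR a (u n) s - chiR a (u 0) s) := by
        rw [← Finset.mul_sum, Finset.sum_range_sub (fun i => chiR a (u i) s)]
    _ ≤ K * 1 := by
        refine mul_le_mul_of_nonneg_left ?_ hK
        linarith [chiR_le a (u n) s, chiR_nonneg a (u 0) s]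
    _ = K := mul_one K

lemma step_apply (a b : ℝ) (u : ℕ → ℝ) (c : ℕ → ℂ) (n : ℕ) (s : DIcc a b) :
    (∑ i ∈ Finset.range n, c i • (chi a b (u (i+1)) - chi a b (u i))) s =
      ∑ i ∈ Finset.range n, c i * ((chiR a (u (i+1)) s.1 : ℂ) - chiR a (u i) s.1) := by
  rw [BoundedContinuousFunction.sum_apply]
  rfl

lemma var_le {a b : ℝ} (L : (DIcc a b →ᵇ ℂ) →L[ℂ] ℂ) :
    eVariationOn (fun t => L (chi a b t)) univ ≤ ENNReal.ofReal ‖L‖ := by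
  refine iSup_le ?_
  rintro ⟨n, u, hu, -⟩
  simp only [edist_dist]
  rw [← ENNReal.ofReal_sum_of_nonneg (fun i _ => dist_nonneg)]
  apply ENNReal.ofReal_le_ofReal
  let d : ℕ → ℂ := fun i => L (chi a b (u (i+1))) - L (chi a b (u i))
  let c : ℕ → ℂ := fun i => (starRingEnd ℂ (d i)) / ‖d i‖
  have hc : ∀ i, ‖c i‖ ≤ 1 := by
    intro i
    simp only [c, norm_div, RCLike.norm_conj, Complex.norm_real, norm_norm]
    exact div_self_le_one _
  have hcd : ∀ i, c i * d i = (‖d i‖ : ℂ) := by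
    intro i
    by_cases h : d i = 0
    · simp [h]
    · have : (‖d i‖ : ℂ) ≠ 0 := by simpa using h
      simp only [c]
      rw [div_mul_eq_mul_div, mul_comm, Complex.mul_conj, Complex.normSq_eq_norm_sq]
      push_cast
      field_simp
  have key : L (∑ i ∈ Finset.range n, c i • (chi a b (u (i+1)) - chi a b (u i))) =
      ((∑ i ∈ Finset.range n, dist (L (chi a b (u (i+1)))) (L (chi a b (u i))) : ℝ) : ℂ) := by
    rw [map_sum]
    push_cast
    refine Finset.sum_congr rfl fun i _ => ?_
    rw [map_smul, map_sub, smul_eq_mul, dist_eq_norm]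
    exact hcd i
  have hn : ‖∑ i ∈ Finset.range n, c i • (chi a b (u (i+1)) - chi a b (u i))‖ ≤ 1 := by
    refine (norm_le zero_le_one).2 fun s => ?_
    rw [step_apply]
    exact norm_step_le a s.1 hu c n zero_le_one fun i _ _ => hc i
  have h1 := L.le_opNorm (∑ i ∈ Finset.range n, c i • (chi a b (u (i+1)) - chi a b (u i)))
  rw [key, Complex.norm_real, Real.norm_of_nonneg (Finset.sum_nonneg fun i _ => dist_nonneg)] at h1
  exact h1.trans (by simpa using mul_le_mul_of_nonneg_left hn (norm_nonneg L))

lemma rep_L {a b : ℝ} (hab : a < b) (L : (DIcc a b →ᵇ ℂ) →L[ℂ] ℂ) (x : C(Icc a b, ℂ)) :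
    Tendsto (rsSum (fun t => L (chi a b t)) (IccExtend hab.le x)) (rsF a b) (𝓝 (L (incl a b x))) := by
  rw [(rsF_basis a b).tendsto_iff Metric.nhds_basis_ball]
  intro ε hε
  set ε' := ε / (‖L‖ + 1) with hε'
  have hL : 0 < ‖L‖ + 1 := by positivity
  have hε'0 : 0 < ε' := by positivity
  obtain ⟨δ, hδ, hxδ⟩ := Metric.uniformContinuous_iff.1 (uc_ext hab.le x) ε' hε'0
  refine ⟨δ, hδ, ?_⟩
  rintro ⟨n, t, ξ⟩ ⟨h1, h2, h3, h4⟩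
  simp only at h1 h2 h3 h4
  set y := IccExtend hab.le x with hy
  have e : rsSum (fun t => L (chi a b t)) y (n, t, ξ) =
      L (∑ i ∈ Finset.range n, y (ξ i) • (chi a b (t (i+1)) - chi a b (t i))) := by
    rw [map_sum]
    refine Finset.sum_congr rfl fun i _ => ?_
    rw [map_smul, map_sub, smul_eq_mul]
  have hn : ‖(∑ i ∈ Finset.range n, y (ξ i) • (chi a b (t (i+1)) - chi a b (t i))) - incl a b x‖ ≤ ε' := by
    refine (norm_le hε'0.le).2 fun s => ?_
    have hs : s.1 ∈ Icc a b := s.2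
    have e3 : (incl a b x) s = ∑ i ∈ Finset.range n,
        y s.1 * ((chiR a (t (i+1)) s.1 : ℂ) - chiR a (t i) s.1) := by
      rw [← Finset.mul_sum, Finset.sum_range_sub (fun i => (chiR a (t i) s.1 : ℂ)), h1, h2]
      have : y s.1 = (incl a b x) s := by
        rw [hy, IccExtend_of_mem _ _ hs]; rfl
      rw [this]
      simp [chiR, hab, hs.2]
    rw [BoundedContinuousFunction.sub_apply, step_apply, e3, ← Finset.sum_sub_distrib]
    simp only [← sub_mul]
    refine norm_step_le a s.1 h3 (fun i => y (ξ i) - y s.1) n hε'0.le fun i hi hne => ?_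
    rw [← dist_eq_norm]
    refine (hxδ ?_).le
    have g : t i ≤ s.1 ∧ s.1 ≤ t (i+1) := by
      by_contra hcon
      apply hne
      rw [not_and_or, not_le, not_le] at hcon
      rcases hcon with hc | hc
      · have l1 : a < t i := hs.1.trans_lt hc
        have l2 := h3 (Nat.le_succ i)
        rw [chiR, chiR, if_pos ⟨l1.trans_le l2, hc.le.trans l2⟩, if_pos ⟨l1, hc.le⟩]
      · have l2 := h3 (Nat.le_succ i)
        rw [chiR, chiR, if_neg (fun h => absurd h.2 (not_le.2 hc)),
          if_neg (fun h => absurd h.2 (not_le.2 (lt_of_le_of_lt l2 hc)))]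
    have := h4 i hi
    rw [Real.dist_eq, abs_lt]; constructor <;> linarith [g.1, g.2]
  rw [Metric.mem_ball, dist_eq_norm, e, ← map_sub]
  calc _ ≤ ‖L‖ * ε' := (L.le_opNorm _).trans (mul_le_mul_of_nonneg_left hn (norm_nonneg _))
    _ < ε := by
      rw [hε', mul_div_assoc', div_lt_iff₀ hL]; nlinarith

lemma surj {a b : ℝ} (hab : a < b) (ℓ : C(Icc a b, ℂ) →L[ℂ] ℂ) :
    ∃ φ : ℝ → ℂ, NBVOn a b φ ∧ RepresentsOn a b hab.le φ ℓ ∧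
      (eVariationOn φ (Icc a b)).toReal ≤ ‖ℓ‖ := by
  have := rsF_neBot hab
  obtain ⟨L, hL, hLn⟩ := exists_ext ℓ
  set f : ℝ → ℂ := fun t => L (chi a b t) with hf
  have hvar : eVariationOn f univ ≤ ENNReal.ofReal ‖L‖ := var_le L
  have hbv : BoundedVariationOn f univ := (hvar.trans_lt ENNReal.ofReal_lt_top).ne
  have hfa : ∀ t ≤ a, f t = 0 := by
    intro t ht
    have : chi a b t = 0 := by
      ext s
      simp [chi_apply, chiR, not_lt.2 ht]
    simp [hf, this]
  have hfb : ∀ t, b ≤ t → f t = f b := by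
    intro t ht
    have : chi a b t = chi a b b := by
      ext s
      have hs : s.1 ∈ Icc a b := s.2
      simp [chi_apply, chiR, hab, hab.trans_le ht, hs.2, hs.2.trans ht]
    simp [hf, this]
  let φ : ℝ → ℂ := fun t => if b ≤ t then f t else Function.leftLim f t
  have φb : ∀ t, b ≤ t → φ t = f t := fun t ht => if_pos ht
  have φl : ∀ t, t < b → φ t = Function.leftLim f t := fun t ht => if_neg (not_le.2 ht)
  have φa : ∀ t ≤ a, φ t = 0 := by
    intro t ht
    rw [φl t (ht.trans_lt hab)]
    refine tendsto_nhds_unique (hbv.tendsto_leftLim t) ?_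
    refine Tendsto.congr' ?_ tendsto_const_nhds
    filter_upwards [self_mem_nhdsWithin] with s hs
    exact (hfa s ((mem_Iio.1 hs).le.trans ht)).symm
  have φvar : eVariationOn φ (Icc a b) ≤ eVariationOn f univ := by
    by_contra! hcon
    let P : ℝ → ℝ → ℝ := fun η t => if b ≤ t then t else t - η
    have hlim : ∀ t ∈ Icc a b, Tendsto (fun η => (f ∘ P η) t) (𝓝[>] 0) (𝓝 (φ t)) := by
      intro t _
      by_cases h : b ≤ t
      · simp only [Function.comp, P, if_pos h, φb t h]; exact tendsto_const_nhds
      · simp only [Function.comp, P, if_neg h, φl t (not_le.1 h)]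
        refine (hbv.tendsto_leftLim t).comp ?_
        refine tendsto_nhdsWithin_iff.2 ⟨?_, ?_⟩
        · have : Tendsto (fun η : ℝ => t - η) (𝓝 0) (𝓝 (t - 0)) := tendsto_const_nhds.sub tendsto_id
          rw [sub_zero] at this
          exact this.mono_left nhdsWithin_le_nhds
        · filter_upwards [self_mem_nhdsWithin] with η hη
          simp only [mem_Ioi, mem_Iio] at hη ⊢; linarith
    have h1 := eVariationOn.lowerSemicontinuous_aux hlim hcon
    obtain ⟨η, h2, h3⟩ := (h1.and (self_mem_nhdsWithin)).exists
    refine absurd h2 (not_lt.2 (eVariationOn.comp_le_of_monotoneOn f (P η) ?_ (fun _ _ => mem_univ _)))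
    intro s _ s' _ hs
    have h3 : 0 < η := h3
    simp only [P]
    split_ifs <;> linarith
  have φbv : BoundedVariationOn φ (Icc a b) := (φvar.trans_lt hbv.lt_top).ne
  refine ⟨φ, ⟨φbv, ?_, φa a le_rfl, φa, ?_⟩, ?_, ?_⟩
  · intro t ht
    have h1 : ContinuousWithinAt (Function.leftLim f) (Iio t) t :=
      hbv.continuousWithinAt_leftLim.mono Iio_subset_Iic_self
    refine h1.congr (fun s hs => φl s ((mem_Iio.1 hs).trans ht.2)) (φl t ht.2)
  · intro t ht
    rw [φb t ht, φb b le_rfl, hfb t ht]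
  · obtain ⟨ℓ', hℓ'⟩ := exists_rep hab φbv
    have hD : Dense {t | DifferentiableAt ℝ f t} :=
      Measure.dense_of_ae (hbv.locallyBoundedVariationOn.ae_differentiableAt)
    have : ℓ' = ℓ := by
      ext x
      have T1 := (represents_iff _ _ _).1 hℓ' x
      have T2 := rep_L hab L x
      rw [hL] at T2
      have T3 := T1.sub T2
      by_contra hne
      have hpos : 0 < ‖ℓ' x - ℓ x‖ := norm_pos_iff.2 (sub_ne_zero.2 hne)
      rw [(rsF_basis a b).tendsto_iff Metric.nhds_basis_ball] at T3
      obtain ⟨δ, hδ, hδ'⟩ := T3 _ hpos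
      obtain ⟨p, hp, hpD⟩ := exists_tp hab hD hδ
      have h1 := hδ' p hp
      have heq : ∀ i, φ (p.2.1 i) = f (p.2.1 i) := by
        intro i
        rcases hpD i with h | h | h
        · rw [h, φa a le_rfl, hfa a le_rfl]
        · exact φb _ h
        · rcases le_or_gt b (p.2.1 i) with h' | h'
          · exact φb _ h'
          · rw [φl _ h']
            exact (DifferentiableAt.continuousAt h).continuousWithinAt.leftLim_eq
      have h2 : rsSum φ (IccExtend hab.le x) p = rsSum (fun t => L (chi a b t)) (IccExtend hab.le x) p := by
        refine Finset.sum_congr rfl fun i _ => ?_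
        rw [heq, heq]
      rw [h2, sub_self, Metric.mem_ball, dist_eq_norm, zero_sub, norm_neg] at h1
      exact lt_irrefl _ h1
    rw [← this]; exact hℓ'
  · refine (ENNReal.toReal_mono ENNReal.ofReal_ne_top (φvar.trans hvar)).trans ?_
    rw [ENNReal.toReal_ofReal (norm_nonneg _)]; exact hLn

lemma nbv_sub {a b : ℝ} {φ ψ : ℝ → ℂ} (hφ : NBVOn a b φ) (hψ : NBVOn a b ψ) :
    NBVOn a b (φ + (-1 : ℂ) • ψ) := by
  obtain ⟨h1, h2, h3, h4, h5⟩ := hφ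
  obtain ⟨k1, k2, k3, k4, k5⟩ := hψ
  refine ⟨?_, fun t ht => (h2 t ht).add ((k2 t ht).const_smul _), by simp [h3, k3],
    fun t ht => by simp [h4 t ht, k4 t ht], fun t ht => by simp [h5 t ht, k5 t ht]⟩
  refine ((iSup_le ?_).trans_lt (ENNReal.add_lt_top.2 ⟨h1.lt_top, k1.lt_top⟩)).ne
  rintro ⟨n, u, hu, us⟩
  refine le_trans ?_ (add_le_add (eVariationOn.sum_le (n := n) hu us) (eVariationOn.sum_le (n := n) hu us))
  rw [← Finset.sum_add_distrib]
  refine Finset.sum_le_sum fun i _ => ?_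
  refine (edist_add_add_le _ _ _ _).trans (add_le_add le_rfl ?_)
  simp

lemma inj {a b : ℝ} (hab : a < b) {φ ψ : ℝ → ℂ} (hφ : NBVOn a b φ) (hψ : NBVOn a b ψ)
    {ℓ : C(Icc a b, ℂ) →L[ℂ] ℂ} (h : RepresentsOn a b hab.le φ ℓ)
    (h' : RepresentsOn a b hab.le ψ ℓ) : φ = ψ := by
  have h1 := rep_add hab h (rep_smul hab (-1) h')
  have e : ℓ + (-1 : ℂ) • ℓ = 0 := by
    ext x
    change ℓ x + (-1 : ℂ) * ℓ x = 0
    ring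
  rw [e] at h1
  have h2 := inj_zero hab (nbv_sub hφ hψ) h1
  funext t
  have := congrFun h2 t
  simp only [Pi.add_apply, Pi.smul_apply, smul_eq_mul, Pi.zero_apply] at this
  linear_combination this

end RSAux

/-- Riesz representation: the map `I : NBV([a,b]) → (C([a,b],ℂ))′`, `φ ↦ (x ↦ ∫ x dφ)`,
is a well-defined isometric isomorphism of Banach spaces: it is linear, bijective and
norm-preserving (`NBV` carries the total-variation norm). -/
theorem nbv_isometric_isomorphism_dual_C (a b : ℝ) (hab : a < b) :
    (∀ φ : ℝ → ℂ, NBVOn a b φ →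
        ∃! ℓ : C(Set.Icc a b, ℂ) →L[ℂ] ℂ, RepresentsOn a b hab.le φ ℓ) ∧
      (∀ ℓ : C(Set.Icc a b, ℂ) →L[ℂ] ℂ,
        ∃! φ : ℝ → ℂ, NBVOn a b φ ∧ RepresentsOn a b hab.le φ ℓ) ∧
      (∀ (φ : ℝ → ℂ) (ℓ : C(Set.Icc a b, ℂ) →L[ℂ] ℂ), NBVOn a b φ →
        RepresentsOn a b hab.le φ ℓ → ‖ℓ‖ = (eVariationOn φ (Set.Icc a b)).toReal) ∧
      (∀ (φ ψ : ℝ → ℂ) (ℓφ ℓψ ℓ : C(Set.Icc a b, ℂ) →L[ℂ] ℂ),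
        NBVOn a b φ → NBVOn a b ψ → RepresentsOn a b hab.le φ ℓφ →
        RepresentsOn a b hab.le ψ ℓψ → RepresentsOn a b hab.le (φ + ψ) ℓ →
        ℓ = ℓφ + ℓψ) ∧
      (∀ (c : ℂ) (φ : ℝ → ℂ) (ℓφ ℓ : C(Set.Icc a b, ℂ) →L[ℂ] ℂ),
        NBVOn a b φ → RepresentsOn a b hab.le φ ℓφ →
        RepresentsOn a b hab.le (c • φ) ℓ → ℓ = c • ℓφ) := by
  refine ⟨fun φ hφ => ?_, fun ℓ => ?_, fun φ ℓ hφ h => ?_, fun φ ψ ℓφ ℓψ ℓ _ _ h1 h2 h3 => ?_,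
    fun c φ ℓφ ℓ _ h1 h2 => ?_⟩
  · obtain ⟨ℓ, hℓ⟩ := RSAux.exists_rep hab hφ.1
    exact ⟨ℓ, hℓ, fun ℓ' h' => RSAux.rep_unique hab h' hℓ⟩
  · obtain ⟨φ, h1, h2, -⟩ := RSAux.surj hab ℓ
    exact ⟨φ, ⟨h1, h2⟩, fun ψ hψ => RSAux.inj hab hψ.1 h1 hψ.2 h2⟩
  · apply le_antisymm
    · exact ContinuousLinearMap.opNorm_le_bound _ ENNReal.toReal_nonneg fun x =>
        RSAux.norm_le_of_tendsto hab hφ.1 x ((RSAux.represents_iff _ _ _).1 h x)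
    · obtain ⟨ψ, h1, h2, h3⟩ := RSAux.surj hab ℓ
      rw [RSAux.inj hab hφ h1 h h2]
      exact h3
  · exact RSAux.rep_unique hab h3 (RSAux.rep_add hab h1 h2)
  · exact RSAux.rep_unique hab h2 (RSAux.rep_smul hab c h1)
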